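/- (A priori bound, divergent form) Let p ∈ (1,∞), l ∈ (0,p), n ∈ [1,∞) real, R ∈ (0,∞]. Let φ : ℝ → ℝ be continuous and odd with τφ(τ) > 0 for a.e. τ, and set Φ(t) := ∫_0^t φ(s) ds. Let a be locally absolutely continuous on [0,R) with a > 0 a.e., let d_a(τ) := (n−1)a(τ)/τ + (1/p)a'(τ) satisfy d_a > 0 a.e. with d_a and d_a^{−1/(p−1)} locally integrable on [0,R). Let h : (0,R) × ℝ² → ℝ be a Carathéodory function such that for some θ ∈ (0,1] and a non-negative measurable q locally integrable on [0,R): h(τ,λ₀,λ₁)λ₁ ≤ θ q(τ)|λ₀|^l |λ₁|^{p−l} + (1−θ) d_a(τ)|λ₁|^p for all λ₀, λ₁ ∈ ℝ and a.e. τ. Assume K(0,R,q,d_a) ≤ 1. Let u be locally absolutely continuous on (0,R) with Φ_p(u') locally absolutely continuous on [0,R), u(0) = 0, and suppose u solves the divergent ODE: (a(τ)Φ_p(u'(τ)))' + (n−1)(a(τ)/τ)Φ_p(u'(τ)) − h(τ,u(τ),u'(τ)) + φ(u(τ)) = 0 for a.e. τ ∈ (0,R). Then for every r ∈ (0,R):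 Φ(|u(r)|) ≤ (1 − 1/p) a(0) |u'(0)|^p. -/

import Mathlib

/-!
Multiplying the equation by `u'` shows that the energy `(1 - 1/p) a |u'|^p + Φ(u)` has derivative
`h(τ, u, u') u' - d_a |u'|^p`, which the growth condition bounds by
`θ (q |u|^l |u'|^{p-l} - d_a |u'|^p)`. The Beesack–Das inequality
`∫ q |u|^l |u'|^{p-l} ≤ K ∫ d_a |u'|^p`, with `K ≤ 1`, makes the integral of that bound nonpositive,
so the energy at `r` is at most its value `(1 - 1/p) a(0) |u'(0)|^p` at `0`; at `r` the kinetic term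
is nonnegative.

The Beesack–Das inequality comes from two applications of Hölder's inequality: one bounds the
primitive of `|u'|` by means of `Z(t) = ∫_s^t v |u'|^p`, the other leaves
`∫ Z^{l/(p-l)} Z' = ((p-l)/p) Z^{p/(p-l)}`.
-/

open MeasureTheory Set Filter
open scoped ENNReal

/-- `Φ_p(λ) = |λ|^{p-2} λ` for `λ ≠ 0`, and `Φ_p(0) = 0`. -/
noncomputable def PhiP (p x : ℝ) : ℝ := if x = 0 then 0 else |x| ^ (p - 2) * x

/-- `u` is absolutely continuous on `[s,t]` with a.e. derivative `u'`:
`u'` is integrable on `[s,t]` and the fundamental theorem of calculus holds. -/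
def ACOn (u u' : ℝ → ℝ) (s t : ℝ) : Prop :=
  MeasureTheory.IntegrableOn u' (Set.Icc s t) ∧
    ∀ x ∈ Set.Icc s t, u x = u s + ∫ σ in s..x, u' σ

/-- The Beesack–Das constant
`K(s,·,q,v) = ((p-l)/p)^{(p-l)/p} [∫_S q(t)^{p/l} v(t)^{-(p-l)/l}
  (∫_s^t v(σ)^{-1/(p-1)} dσ)^{p-1} dt]^{l/p}`, over a set `S`. -/
noncomputable def BDK (p l : ℝ) (q v : ℝ → ℝ) (s : ℝ) (S : Set ℝ) : ℝ≥0∞ :=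
  ENNReal.ofReal (((p - l) / p) ^ ((p - l) / p)) *
    (∫⁻ t in S,
      ENNReal.ofReal (q t) ^ (p / l) * ENNReal.ofReal (v t) ^ (-((p - l) / l)) *
        (∫⁻ σ in Set.Ioc s t, ENNReal.ofReal (v σ) ^ (-(1 / (p - 1)))) ^ (p - 1)) ^ (l / p)

/-- `δ_a(τ) = (n-1) a(τ)/τ - (1 - 1/p) a'(τ)`. -/
noncomputable def deltaA (n p : ℝ) (a a' : ℝ → ℝ) : ℝ → ℝ :=
  fun τ => (n - 1) * a τ / τ - (1 - 1 / p) * a' τ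

/-- `d_a(τ) = (n-1) a(τ)/τ + (1/p) a'(τ)`. -/
noncomputable def dA (n p : ℝ) (a a' : ℝ → ℝ) : ℝ → ℝ :=
  fun τ => (n - 1) * a τ / τ + (1 / p) * a' τ

section AbsoluteContinuity

lemma absolutelyContinuousOnInterval_of_dist_le {X Y : Type*} [PseudoMetricSpace X]
    [PseudoMetricSpace Y] {f : ℝ → X} {g : ℝ → Y} {s t C : ℝ}
    (hf : AbsolutelyContinuousOnInterval f s t)
    (hfg : ∀ x ∈ uIcc s t, ∀ y ∈ uIcc s t, dist (g x) (g y) ≤ C * dist (f x) (f y)) :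
    AbsolutelyContinuousOnInterval g s t := by
  have hlim := Tendsto.const_mul C hf
  rw [mul_zero] at hlim
  refine squeeze_zero' (.of_forall fun E => Finset.sum_nonneg fun i _ => dist_nonneg) ?_ hlim
  filter_upwards [mem_inf_of_right (mem_principal_self _)] with E hE
  rw [Finset.mul_sum]
  exact Finset.sum_le_sum fun i hi => hfg _ (hE.1 i hi).1 _ (hE.1 i hi).2

lemma nonneg_of_ae_nonneg_of_continuousOn {f : ℝ → ℝ} {s t : ℝ} (hst : s < t)
    (hf : ContinuousOn f (Icc s t)) (hf0 : ∀ᵐ x ∂volume.restrict (Icc s t), 0 ≤ f x) :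
    ∀ x ∈ Icc s t, 0 ≤ f x := by
  have hae : (fun x => |f x|) =ᵐ[volume.restrict (Icc s t)] f := hf0.mono fun x => abs_of_nonneg
  exact fun x hx => abs_eq_self.1
    (Measure.eqOn_Icc_of_ae_eq volume hst.ne hae hf.abs hf hx)

namespace ACOn

variable {f f' g g' : ℝ → ℝ} {s t : ℝ}

lemma integrableOn (hf : ACOn f f' s t) : IntegrableOn f' (Ioc s t) :=
  hf.1.mono_set Ioc_subset_Icc_self

lemma integral_eq_sub (hst : s ≤ t) (hf : ACOn f f' s t) : ∫ x in Ioc s t, f' x = f t - f s := by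
  rw [hf.2 t ⟨hst, le_rfl⟩, intervalIntegral.integral_of_le hst, add_sub_cancel_left]

lemma of_integrableOn (c : ℝ) (hf : IntegrableOn f (Ioc s t)) :
    ACOn (fun x => c + ∫ y in s..x, f y) f s t :=
  ⟨(integrableOn_Icc_iff_integrableOn_Ioc (by simp)).2 hf, fun x _ => by simp⟩

lemma absolutelyContinuousOnInterval (hst : s ≤ t) (hf : ACOn f f' s t) :
    AbsolutelyContinuousOnInterval f s t := by
  have hint : IntervalIntegrable f' volume s t :=
    (intervalIntegrable_iff_integrableOn_Icc_of_le hst).2 hf.1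
  have hprim := hint.absolutelyContinuousOnInterval_intervalIntegral (c := s) left_mem_uIcc
  refine absolutelyContinuousOnInterval_of_dist_le (C := 1) hprim fun x hx y hy => ?_
  rw [uIcc_of_le hst] at hx hy
  rw [hf.2 x hx, hf.2 y hy, dist_add_left, one_mul]

lemma continuousOn (hf : ACOn f f' s t) : ContinuousOn f (Icc s t) := fun x hx => by
  have hst : s ≤ t := hx.1.trans hx.2
  have hcont := (hf.absolutelyContinuousOnInterval hst).continuousOn
  rw [uIcc_of_le hst] at hcont
  exact hcont x hx

lemma ae_hasDerivAt (hf : ACOn f f' s t) :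
    ∀ᵐ x ∂volume.restrict (Ioc s t), HasDerivAt f (f' x) x := by
  rw [← restrict_Ioo_eq_restrict_Ioc, ae_restrict_iff' measurableSet_Ioo]
  rcases lt_or_ge s t with hst | hts
  · have hint : IntervalIntegrable f' volume s t :=
      (intervalIntegrable_iff_integrableOn_Icc_of_le hst.le).2 hf.1
    filter_upwards [hint.ae_hasDerivAt_integral] with x hx hxI
    have hprim := hx (Icc_subset_uIcc (Ioo_subset_Icc_self hxI)) s left_mem_uIcc
    refine (hprim.const_add (f s)).congr_of_eventuallyEq ?_
    filter_upwards [Icc_mem_nhds hxI.1 hxI.2] with y hy using hf.2 y hy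
  · simp [Ioo_eq_empty hts.not_gt]

lemma of_ae_hasDerivAt (hst : s ≤ t) (hf : AbsolutelyContinuousOnInterval f s t)
    (hderiv : ∀ᵐ x ∂volume.restrict (Ioc s t), HasDerivAt f (f' x) x) : ACOn f f' s t := by
  have hae : deriv f =ᵐ[volume.restrict (Ioc s t)] f' := hderiv.mono fun x => HasDerivAt.deriv
  refine ⟨?_, fun x hx => ?_⟩
  · rw [integrableOn_Icc_iff_integrableOn_Ioc (by simp)]
    exact ((intervalIntegrable_iff_integrableOn_Ioc_of_le hst).1
      hf.intervalIntegrable_deriv).congr hae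
  · have hsub : uIcc s x ⊆ uIcc s t := by
      rw [uIcc_of_le hx.1, uIcc_of_le hst]
      exact Icc_subset_Icc_right hx.2
    have hftc : ∫ y in s..x, f' y = f x - f s := by
      rw [← (hf.mono hsub).integral_deriv_eq_sub, intervalIntegral.integral_of_le hx.1,
        intervalIntegral.integral_of_le hx.1]
      exact (integral_congr_ae
        (ae_restrict_of_ae_restrict_of_subset (Ioc_subset_Ioc_right hx.2) hae)).symm
    rw [hftc, add_sub_cancel]

lemma congr_deriv (hst : s ≤ t) (hf : ACOn f f' s t)
    (hae : ∀ᵐ x ∂volume.restrict (Ioc s t), f' x = g' x) : ACOn f g' s t := by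
  refine of_ae_hasDerivAt hst (hf.absolutelyContinuousOnInterval hst) ?_
  filter_upwards [hf.ae_hasDerivAt, hae] with x hx heq using heq ▸ hx

lemma ae_eq_deriv (hf : ACOn f f' s t) (hf₂ : ACOn f g' s t) :
    ∀ᵐ x ∂volume.restrict (Ioc s t), f' x = g' x := by
  filter_upwards [hf.ae_hasDerivAt, hf₂.ae_hasDerivAt] with x hx hx₂ using hx.unique hx₂

lemma add (hst : s ≤ t) (hf : ACOn f f' s t) (hg : ACOn g g' s t) :
    ACOn (fun x => f x + g x) (fun x => f' x + g' x) s t := by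
  refine of_ae_hasDerivAt hst ((hf.absolutelyContinuousOnInterval hst).add
    (hg.absolutelyContinuousOnInterval hst)) ?_
  filter_upwards [hf.ae_hasDerivAt, hg.ae_hasDerivAt] with x hfx hgx using hfx.add hgx

lemma mul (hst : s ≤ t) (hf : ACOn f f' s t) (hg : ACOn g g' s t) :
    ACOn (fun x => f x * g x) (fun x => f' x * g x + f x * g' x) s t := by
  refine of_ae_hasDerivAt hst ((hf.absolutelyContinuousOnInterval hst).mul
    (hg.absolutelyContinuousOnInterval hst)) ?_
  filter_upwards [hf.ae_hasDerivAt, hg.ae_hasDerivAt] with x hfx hgx using hfx.mul hgx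

lemma const_mul (hst : s ≤ t) (c : ℝ) (hf : ACOn f f' s t) :
    ACOn (fun x => c * f x) (fun x => c * f' x) s t := by
  refine of_ae_hasDerivAt hst ((hf.absolutelyContinuousOnInterval hst).const_mul c) ?_
  filter_upwards [hf.ae_hasDerivAt] with x hfx using hfx.const_mul c

lemma comp {G G' : ℝ → ℝ} (hst : s ≤ t) (hG : ∀ y, HasDerivAt G (G' y) y) (hG' : Continuous G')
    (hf : ACOn f f' s t) : ACOn (fun x => G (f x)) (fun x => G' (f x) * f' x) s t := by
  have hfac := hf.absolutelyContinuousOnInterval hst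
  have hGdiff : ContDiff ℝ 1 G := by
    rw [contDiff_one_iff_deriv, funext fun y => (hG y).deriv]
    exact ⟨fun y => (hG y).differentiableAt, hG'⟩
  obtain ⟨C, hC⟩ := hfac.exists_bound
  obtain ⟨L, hL⟩ := (hGdiff.contDiffOn (s := Icc (-C) C)).exists_lipschitzOnWith one_ne_zero
    (convex_Icc _ _) isCompact_Icc
  refine of_ae_hasDerivAt hst (absolutelyContinuousOnInterval_of_dist_le hfac fun x hx y hy =>
    hL.dist_le_mul _ (abs_le.1 (hC x hx)) _ (abs_le.1 (hC y hy))) ?_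
  filter_upwards [hf.ae_hasDerivAt] with x hfx using (hG (f x)).comp x hfx

end ACOn

end AbsoluteContinuity

section BeesackDas

variable {p l s r : ℝ}

lemma integral_primitive_rpow_mul {α : ℝ} (hα : 0 ≤ α) (hsr : s ≤ r) {f : ℝ → ℝ}
    (hf : IntegrableOn f (Ioc s r)) :
    IntegrableOn (fun t => (∫ σ in s..t, f σ) ^ α * f t) (Ioc s r) ∧
      ∫ t in Ioc s r, (∫ σ in s..t, f σ) ^ α * f t =
        1 / (α + 1) * (∫ σ in s..r, f σ) ^ (α + 1) := by
  have hα1 : α + 1 ≠ 0 := by positivity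
  have hprim : ACOn (fun t => ∫ σ in s..t, f σ) f s r := by
    simpa using ACOn.of_integrableOn 0 hf
  have hpow : ACOn (fun t => 1 / (α + 1) * (∫ σ in s..t, f σ) ^ (α + 1))
      (fun t => (∫ σ in s..t, f σ) ^ α * f t) s r := by
    refine hprim.comp hsr (G := fun y => 1 / (α + 1) * y ^ (α + 1)) (G' := fun y => y ^ α)
      (fun y => ?_) (Real.continuous_rpow_const hα)
    have hderiv := (Real.hasDerivAt_rpow_const (x := y) (p := α + 1)
      (.inr (by linarith))).const_mul (1 / (α + 1))
    rwa [add_sub_cancel_right, ← mul_assoc, one_div_mul_cancel hα1, one_mul] at hderiv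
  refine ⟨hpow.integrableOn, ?_⟩
  rw [hpow.integral_eq_sub hsr, intervalIntegral.integral_same, Real.zero_rpow hα1, mul_zero,
    sub_zero]

lemma lintegral_primitive_rpow_mul {α : ℝ} (hα : 0 ≤ α) (hsr : s ≤ r) {m : ℝ → ℝ≥0∞}
    (hm : AEMeasurable m (volume.restrict (Ioc s r))) (hfin : ∫⁻ t in Ioc s r, m t ≠ ⊤) :
    ∫⁻ t in Ioc s r, (∫⁻ σ in Ioc s t, m σ) ^ α * m t =
      ENNReal.ofReal (1 / (α + 1)) * (∫⁻ t in Ioc s r, m t) ^ (α + 1) := by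
  set z : ℝ → ℝ := fun t => ∫ σ in s..t, (m σ).toReal
  have hmfin : ∀ᵐ t ∂volume.restrict (Ioc s r), m t < ⊤ := ae_lt_top' hm hfin
  have hz0 (t : ℝ) (ht : t ∈ Icc s r) : 0 ≤ z t :=
    intervalIntegral.integral_nonneg ht.1 fun _ _ => ENNReal.toReal_nonneg
  have hz (t : ℝ) (ht : t ∈ Icc s r) : ∫⁻ σ in Ioc s t, m σ = ENNReal.ofReal (z t) := by
    have hsub : Ioc s t ⊆ Ioc s r := Ioc_subset_Ioc_right ht.2
    simp only [z, intervalIntegral.integral_of_le ht.1]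
    rw [integral_toReal (hm.mono_set hsub) (ae_restrict_of_ae_restrict_of_subset hsub hmfin),
      ENNReal.ofReal_toReal (ne_top_of_le_ne_top hfin (lintegral_mono_set hsub))]
  obtain ⟨hint, hval⟩ :=
    integral_primitive_rpow_mul hα hsr (integrable_toReal_of_lintegral_ne_top hm hfin)
  have hint0 : 0 ≤ᵐ[volume.restrict (Ioc s r)] fun t => z t ^ α * (m t).toReal := by
    filter_upwards [ae_restrict_mem measurableSet_Ioc] with t ht
    exact mul_nonneg (Real.rpow_nonneg (hz0 t (Ioc_subset_Icc_self ht)) α) ENNReal.toReal_nonneg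
  calc ∫⁻ t in Ioc s r, (∫⁻ σ in Ioc s t, m σ) ^ α * m t
      = ∫⁻ t in Ioc s r, ENNReal.ofReal (z t ^ α * (m t).toReal) := by
        refine lintegral_congr_ae ?_
        filter_upwards [ae_restrict_mem measurableSet_Ioc, hmfin] with t ht htfin
        have hzt := hz0 t (Ioc_subset_Icc_self ht)
        rw [hz t (Ioc_subset_Icc_self ht), ENNReal.ofReal_mul (Real.rpow_nonneg hzt α),
          ENNReal.ofReal_rpow_of_nonneg hzt hα, ENNReal.ofReal_toReal htfin.ne]
    _ = ENNReal.ofReal (1 / (α + 1) * z r ^ (α + 1)) := by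
        rw [← ofReal_integral_eq_lintegral_ofReal hint hint0, hval]
    _ = ENNReal.ofReal (1 / (α + 1)) * (∫⁻ t in Ioc s r, m t) ^ (α + 1) := by
        rw [hz r ⟨hsr, le_rfl⟩, ENNReal.ofReal_rpow_of_nonneg (hz0 r ⟨hsr, le_rfl⟩) (by positivity),
          ENNReal.ofReal_mul (by positivity)]

lemma lintegral_primitive_rpow_mul_rpow (hl0 : 0 ≤ l) (hlp : l < p) (hsr : s ≤ r)
    {m : ℝ → ℝ≥0∞} (hm : AEMeasurable m (volume.restrict (Ioc s r)))
    (hfin : ∫⁻ t in Ioc s r, m t ≠ ⊤) :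
    (∫⁻ t in Ioc s r, (∫⁻ σ in Ioc s t, m σ) ^ (l / (p - l)) * m t) ^ ((p - l) / p) =
      ENNReal.ofReal (((p - l) / p) ^ ((p - l) / p)) * ∫⁻ t in Ioc s r, m t := by
  have hp0 : 0 < p := hl0.trans_lt hlp
  have hpl : 0 < p - l := sub_pos.2 hlp
  have hplp : 0 ≤ (p - l) / p := div_nonneg hpl.le hp0.le
  rw [lintegral_primitive_rpow_mul (div_nonneg hl0 hpl.le) hsr hm hfin,
    show l / (p - l) + 1 = p / (p - l) by field_simp; ring, one_div_div,
    ENNReal.mul_rpow_of_nonneg _ _ hplp, ← ENNReal.rpow_mul,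
    show p / (p - l) * ((p - l) / p) = 1 by field_simp, ENNReal.rpow_one,
    ENNReal.ofReal_rpow_of_nonneg hplp hplp]

lemma lintegral_le_rpow_mul_rpow_of_weight {X : Type*} [MeasurableSpace X] {μ : Measure X}
    (hp : 1 < p) {V D : X → ℝ≥0∞} (hV : AEMeasurable V μ) (hD : AEMeasurable D μ)
    (hV0 : ∀ᵐ x ∂μ, V x ≠ 0 ∧ V x ≠ ⊤) :
    ∫⁻ x, D x ∂μ ≤
      (∫⁻ x, V x ^ (-(1 / (p - 1))) ∂μ) ^ ((p - 1) / p) * (∫⁻ x, V x * D x ^ p ∂μ) ^ (1 / p) := by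
  have hp0 : 0 < p := by linarith
  have hp1 : 0 < p - 1 := by linarith
  calc ∫⁻ x, D x ∂μ
      = ∫⁻ x, (V x ^ (-(1 / (p - 1)))) ^ ((p - 1) / p) * (V x * D x ^ p) ^ (1 / p) ∂μ := by
        refine lintegral_congr_ae ?_
        filter_upwards [hV0] with x hx
        have hexp : -(1 / (p - 1)) * ((p - 1) / p) + 1 / p = 0 := by field_simp; ring
        rw [ENNReal.mul_rpow_of_nonneg _ _ (by positivity), ← ENNReal.rpow_mul, ← ENNReal.rpow_mul,
          ← mul_assoc, ← ENNReal.rpow_add _ _ hx.1 hx.2, hexp, mul_one_div_cancel hp0.ne',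
          ENNReal.rpow_zero, ENNReal.rpow_one, one_mul]
    _ ≤ _ := ENNReal.lintegral_mul_norm_pow_le (hV.pow_const _) (hV.mul (hD.pow_const _))
        (by positivity) (by positivity) (by field_simp; ring)

lemma mul_rpow_mul_rpow_le_of_le {Q V U W Z D : ℝ≥0∞} (hl0 : 0 < l) (hlp : l < p)
    (hV0 : V ≠ 0) (hV : V ≠ ⊤) (hU : U ≤ W ^ ((p - 1) / p) * Z ^ (1 / p)) :
    Q * U ^ l * D ^ (p - l) ≤
      (Q ^ (p / l) * V ^ (-((p - l) / l)) * W ^ (p - 1)) ^ (l / p) *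
        (Z ^ (l / (p - l)) * (V * D ^ p)) ^ ((p - l) / p) := by
  have hp0 : 0 < p := hl0.trans hlp
  have hpl : 0 < p - l := by linarith
  have hlp0 : 0 ≤ l / p := by positivity
  have hplp0 : 0 ≤ (p - l) / p := by positivity
  have hVexp : V ^ (-((p - l) / l) * (l / p)) * V ^ ((p - l) / p) = 1 := by
    rw [← ENNReal.rpow_add _ _ hV0 hV, show -((p - l) / l) * (l / p) + (p - l) / p = 0 by
      field_simp; ring, ENNReal.rpow_zero]
  calc Q * U ^ l * D ^ (p - l)
      ≤ Q * (W ^ ((p - 1) / p) * Z ^ (1 / p)) ^ l * D ^ (p - l) := by gcongr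
    _ = Q * (W ^ ((p - 1) * (l / p)) * Z ^ (l / p)) * D ^ (p - l) := by
        rw [ENNReal.mul_rpow_of_nonneg _ _ hl0.le, ← ENNReal.rpow_mul, ← ENNReal.rpow_mul,
          show (p - 1) / p * l = (p - 1) * (l / p) by ring, show 1 / p * l = l / p by ring]
    _ = Q * (W ^ ((p - 1) * (l / p)) * Z ^ (l / p)) * D ^ (p - l) *
          (V ^ (-((p - l) / l) * (l / p)) * V ^ ((p - l) / p)) := by rw [hVexp, mul_one]
    _ = _ := by
        rw [ENNReal.mul_rpow_of_nonneg _ _ hlp0, ENNReal.mul_rpow_of_nonneg _ _ hlp0,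
          ENNReal.mul_rpow_of_nonneg _ _ hplp0, ENNReal.mul_rpow_of_nonneg _ _ hplp0]
        simp only [← ENNReal.rpow_mul]
        rw [show p / l * (l / p) = 1 by field_simp,
          show l / (p - l) * ((p - l) / p) = l / p by field_simp,
          show p * ((p - l) / p) = p - l by field_simp, ENNReal.rpow_one]
        ring

lemma measurable_lintegral_Ioc (m : ℝ → ℝ≥0∞) (s : ℝ) :
    Measurable fun t => ∫⁻ σ in Ioc s t, m σ :=
  Monotone.measurable fun _ _ hst => lintegral_mono_set (Ioc_subset_Ioc_right hst)

lemma BDK_mono_set {q v : ℝ → ℝ} {S T : Set ℝ} (hl0 : 0 ≤ l) (hlp : l ≤ p) (hST : S ⊆ T) :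
    BDK p l q v s S ≤ BDK p l q v s T := by
  have : 0 ≤ l / p := div_nonneg hl0 (hl0.trans hlp)
  unfold BDK
  gcongr

theorem lintegral_mul_rpow_le_BDK_mul (hp : 1 < p) (hl0 : 0 < l) (hlp : l < p) (hsr : s ≤ r)
    {q v : ℝ → ℝ} {D : ℝ → ℝ≥0∞} (hq : AEMeasurable q (volume.restrict (Ioc s r)))
    (hv : AEMeasurable v (volume.restrict (Ioc s r)))
    (hD : AEMeasurable D (volume.restrict (Ioc s r)))
    (hv0 : ∀ᵐ t ∂volume.restrict (Ioc s r), 0 < v t)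
    (hfin : ∫⁻ t in Ioc s r, ENNReal.ofReal (v t) * D t ^ p ≠ ⊤) :
    ∫⁻ t in Ioc s r, ENNReal.ofReal (q t) * (∫⁻ σ in Ioc s t, D σ) ^ l * D t ^ (p - l) ≤
      BDK p l q v s (Ioc s r) * ∫⁻ t in Ioc s r, ENNReal.ofReal (v t) * D t ^ p := by
  have hp0 : 0 < p := by linarith
  have hpl : 0 < p - l := by linarith
  set V : ℝ → ℝ≥0∞ := fun t => ENNReal.ofReal (v t)
  set W : ℝ → ℝ≥0∞ := fun t => ∫⁻ σ in Ioc s t, V σ ^ (-(1 / (p - 1)))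
  set Z : ℝ → ℝ≥0∞ := fun t => ∫⁻ σ in Ioc s t, V σ * D σ ^ p
  set A : ℝ → ℝ≥0∞ := fun t =>
    ENNReal.ofReal (q t) ^ (p / l) * V t ^ (-((p - l) / l)) * W t ^ (p - 1)
  have hV : AEMeasurable V (volume.restrict (Ioc s r)) := hv.ennreal_ofReal
  have hVD : AEMeasurable (fun t => V t * D t ^ p) (volume.restrict (Ioc s r)) :=
    hV.mul (hD.pow_const _)
  have hW : Measurable W := measurable_lintegral_Ioc _ s
  have hZ : Measurable Z := measurable_lintegral_Ioc _ s
  have hV0 : ∀ᵐ t ∂volume.restrict (Ioc s r), V t ≠ 0 ∧ V t ≠ ⊤ := by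
    filter_upwards [hv0] with t ht using
      ⟨(ENNReal.ofReal_pos.2 ht).ne', ENNReal.ofReal_ne_top⟩
  have hprim (t : ℝ) (ht : t ∈ Ioc s r) :
      ∫⁻ σ in Ioc s t, D σ ≤ W t ^ ((p - 1) / p) * Z t ^ (1 / p) := by
    have hsub : Ioc s t ⊆ Ioc s r := Ioc_subset_Ioc_right ht.2
    exact lintegral_le_rpow_mul_rpow_of_weight hp (hV.mono_set hsub) (hD.mono_set hsub)
      (ae_restrict_of_ae_restrict_of_subset hsub hV0)
  calc ∫⁻ t in Ioc s r, ENNReal.ofReal (q t) * (∫⁻ σ in Ioc s t, D σ) ^ l * D t ^ (p - l)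
      ≤ ∫⁻ t in Ioc s r, A t ^ (l / p) *
          (Z t ^ (l / (p - l)) * (V t * D t ^ p)) ^ ((p - l) / p) := by
        refine lintegral_mono_ae ?_
        filter_upwards [hV0, ae_restrict_mem measurableSet_Ioc] with t hVt ht
        exact mul_rpow_mul_rpow_le_of_le hl0 hlp hVt.1 hVt.2 (hprim t ht)
    _ ≤ (∫⁻ t in Ioc s r, A t) ^ (l / p) *
          (∫⁻ t in Ioc s r, Z t ^ (l / (p - l)) * (V t * D t ^ p)) ^ ((p - l) / p) :=
        ENNReal.lintegral_mul_norm_pow_le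
          (((hq.ennreal_ofReal.pow_const _).mul (hV.pow_const _)).mul (hW.pow_const _).aemeasurable)
          ((hZ.pow_const _).aemeasurable.mul hVD)
          (div_pos hl0 hp0).le (div_pos hpl hp0).le (by field_simp; ring)
    _ = BDK p l q v s (Ioc s r) * Z r := by
        rw [lintegral_primitive_rpow_mul_rpow hl0.le hlp hsr hVD hfin, BDK]
        ring

lemma integrable_and_integral_le_of_lintegral_le {X : Type*} [MeasurableSpace X] {μ : Measure X}
    {f g : X → ℝ} {K : ℝ≥0∞} (hK : K ≠ ⊤) (hf : AEStronglyMeasurable f μ) (hf0 : 0 ≤ᵐ[μ] f)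
    (hg : Integrable g μ) (hg0 : 0 ≤ᵐ[μ] g)
    (hle : ∫⁻ x, ENNReal.ofReal (f x) ∂μ ≤ K * ∫⁻ x, ENNReal.ofReal (g x) ∂μ) :
    Integrable f μ ∧ ∫ x, f x ∂μ ≤ K.toReal * ∫ x, g x ∂μ := by
  rw [← ofReal_integral_eq_lintegral_ofReal hg hg0] at hle
  have hfin := ENNReal.mul_ne_top hK (ENNReal.ofReal_ne_top (r := ∫ x, g x ∂μ))
  refine ⟨(lintegral_ofReal_ne_top_iff_integrable hf hf0).1 (ne_top_of_le_ne_top hfin hle), ?_⟩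
  rw [integral_eq_lintegral_of_nonneg_ae hf0 hf,
    ← ENNReal.toReal_ofReal (integral_nonneg_of_ae hg0), ← ENNReal.toReal_mul]
  exact ENNReal.toReal_mono hfin hle

theorem integral_mul_rpow_le_BDK_mul (hp : 1 < p) (hl0 : 0 < l) (hlp : l < p) (hsr : s ≤ r)
    {q v u u' : ℝ → ℝ} (hq : AEMeasurable q (volume.restrict (Ioc s r)))
    (hv : AEMeasurable v (volume.restrict (Ioc s r)))
    (hq0 : ∀ᵐ t ∂volume.restrict (Ioc s r), 0 ≤ q t)
    (hv0 : ∀ᵐ t ∂volume.restrict (Ioc s r), 0 < v t)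
    (hK : BDK p l q v s (Ioc s r) ≠ ⊤) (hu : ACOn u u' s r) (hus : u s = 0)
    (hint : IntegrableOn (fun t => v t * |u' t| ^ p) (Ioc s r)) :
    IntegrableOn (fun t => q t * |u t| ^ l * |u' t| ^ (p - l)) (Ioc s r) ∧
      ∫ t in Ioc s r, q t * |u t| ^ l * |u' t| ^ (p - l) ≤
        (BDK p l q v s (Ioc s r)).toReal * ∫ t in Ioc s r, v t * |u' t| ^ p := by
  have hu'meas : AEMeasurable u' (volume.restrict (Ioc s r)) := hu.integrableOn.aemeasurable
  have humeas : AEMeasurable u (volume.restrict (Ioc s r)) :=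
    (hu.continuousOn.mono Ioc_subset_Icc_self).aemeasurable measurableSet_Ioc
  have hBmeas : AEMeasurable (fun t => q t * |u t| ^ l * |u' t| ^ (p - l))
      (volume.restrict (Ioc s r)) :=
    (hq.mul (humeas.abs.pow_const l)).mul (hu'meas.abs.pow_const (p - l))
  have hB0 : 0 ≤ᵐ[volume.restrict (Ioc s r)] fun t => q t * |u t| ^ l * |u' t| ^ (p - l) := by
    filter_upwards [hq0] with t ht
    simp only [Pi.zero_apply]
    positivity
  have hM0 : 0 ≤ᵐ[volume.restrict (Ioc s r)] fun t => v t * |u' t| ^ p := by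
    filter_upwards [hv0] with t ht
    simp only [Pi.zero_apply]
    positivity
  have hprim (t : ℝ) (ht : t ∈ Ioc s r) : ENNReal.ofReal |u t| ≤ ∫⁻ σ in Ioc s t, ‖u' σ‖ₑ := by
    rw [hu.2 t (Ioc_subset_Icc_self ht), hus, zero_add, intervalIntegral.integral_of_le ht.1.le,
      ← Real.enorm_eq_ofReal_abs]
    exact enorm_integral_le_lintegral_enorm u'
  have hMeq : ∫⁻ t in Ioc s r, ENNReal.ofReal (v t) * ‖u' t‖ₑ ^ p =
      ∫⁻ t in Ioc s r, ENNReal.ofReal (v t * |u' t| ^ p) := by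
    refine lintegral_congr_ae ?_
    filter_upwards [hv0] with t ht
    rw [ENNReal.ofReal_mul ht.le, Real.enorm_eq_ofReal_abs,
      ENNReal.ofReal_rpow_of_nonneg (abs_nonneg _) (by linarith)]
  refine integrable_and_integral_le_of_lintegral_le hK hBmeas.aestronglyMeasurable hB0 hint hM0 ?_
  rw [← hMeq]
  refine le_trans (lintegral_mono_ae ?_) (lintegral_mul_rpow_le_BDK_mul hp hl0 hlp hsr hq hv
    hu'meas.enorm hv0 (hMeq ▸ (lintegral_ofReal_ne_top_iff_integrable hint.1 hM0).2 hint))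
  filter_upwards [hq0, ae_restrict_mem measurableSet_Ioc] with t hqt ht
  rw [ENNReal.ofReal_mul (by positivity), ENNReal.ofReal_mul hqt, Real.enorm_eq_ofReal_abs,
    ← ENNReal.ofReal_rpow_of_nonneg (abs_nonneg _) hl0.le,
    ← ENNReal.ofReal_rpow_of_nonneg (abs_nonneg _) (by linarith)]
  gcongr
  exact hprim t ht

end BeesackDas

section PhiP

variable {p q : ℝ}

lemma PhiP_eq_rpow_mul (p x : ℝ) : PhiP p x = |x| ^ (p - 2) * x := by
  unfold PhiP
  split_ifs with hx <;> simp [hx]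

lemma abs_PhiP (hp : 1 < p) (x : ℝ) : |PhiP p x| = |x| ^ (p - 1) := by
  rw [PhiP_eq_rpow_mul, abs_mul, abs_of_nonneg (by positivity)]
  rcases eq_or_ne x 0 with rfl | hx
  · simp [Real.zero_rpow (sub_pos.2 hp).ne']
  · rw [← Real.rpow_add_one (abs_ne_zero.2 hx)]
    ring_nf

lemma PhiP_mul_self (hp : 1 < p) (x : ℝ) : PhiP p x * x = |x| ^ p := by
  rcases eq_or_ne x 0 with rfl | hx
  · simp [Real.zero_rpow (show p ≠ 0 by linarith)]
  · rw [PhiP_eq_rpow_mul, mul_assoc, ← abs_mul_abs_self, ← sq, ← Real.rpow_natCast,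
      ← Real.rpow_add (abs_pos.2 hx)]
    norm_num

lemma abs_PhiP_rpow (hpq : p.HolderConjugate q) (x : ℝ) : |PhiP p x| ^ q = |x| ^ p := by
  rw [abs_PhiP hpq.lt, ← Real.rpow_mul (abs_nonneg x), hpq.sub_one_mul_conj]

lemma PhiP_PhiP (hpq : p.HolderConjugate q) (x : ℝ) : PhiP q (PhiP p x) = x := by
  rcases eq_or_ne x 0 with rfl | hx
  · simp [PhiP]
  · have hexp : (p - 1) * (q - 2) + (p - 2) = 0 := by linarith [hpq.mul_eq_add]
    rw [PhiP_eq_rpow_mul q, abs_PhiP hpq.lt, ← Real.rpow_mul (abs_nonneg x), PhiP_eq_rpow_mul,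
      ← mul_assoc, ← Real.rpow_add (abs_pos.2 hx), hexp, Real.rpow_zero, one_mul]

lemma hasDerivAt_abs_rpow_PhiP (hp : 1 < p) (x : ℝ) :
    HasDerivAt (fun y : ℝ => |y| ^ p) (p * PhiP p x) x := by
  simpa only [PhiP_eq_rpow_mul, mul_assoc] using hasDerivAt_abs_rpow x hp

lemma continuous_PhiP (hp : 1 < p) : Continuous (PhiP p) := by
  have hderiv : Continuous (deriv fun y : ℝ => |y| ^ p) :=
    (contDiff_norm_rpow (E := ℝ) hp).continuous_deriv le_rfl
  rw [funext fun x => (hasDerivAt_abs_rpow_PhiP hp x).deriv] at hderiv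
  simpa [(zero_lt_one.trans hp).ne'] using hderiv.const_mul p⁻¹

end PhiP

section Energy

variable {p l n θ r : ℝ} {φ a a' q u u' v' w' : ℝ → ℝ} {h : ℝ → ℝ → ℝ → ℝ}

lemma integral_abs_of_odd {E : Type*} [NormedAddCommGroup E] [NormedSpace ℝ E] {f : ℝ → E}
    (hf : Function.Odd f) (x : ℝ) : ∫ σ in (0 : ℝ)..|x|, f σ = ∫ σ in (0 : ℝ)..x, f σ := by
  rcases abs_choice x with hx | hx <;> rw [hx]
  rw [← neg_zero, ← intervalIntegral.integral_comp_neg, intervalIntegral.integral_symm]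
  simp [hf _]

/-- The energy `(1 - 1/p) a |u'|^p + Φ(u)`, with `Φ(x) = ∫_0^x φ`, of the equation
`(a Φ_p(u'))' + φ(u) = 0`; it is the Lyapunov function of the equation with lower order terms. -/
noncomputable def energy (p : ℝ) (φ a u u' : ℝ → ℝ) (τ : ℝ) : ℝ :=
  (1 - 1 / p) * (a τ * |u' τ| ^ p) + ∫ σ in (0 : ℝ)..u τ, φ σ

lemma ACOn.energy {s t : ℝ} (hp : 1 < p) (hst : s ≤ t) (hφ : Continuous φ) (ha : ACOn a a' s t)
    (hu : ACOn u u' s t) (hv : ACOn (fun τ => PhiP p (u' τ)) v' s t)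
    (hw : ACOn (fun τ => a τ * PhiP p (u' τ)) w' s t) :
    ACOn (energy p φ a u u')
      (fun τ => w' τ * u' τ - 1 / p * a' τ * |u' τ| ^ p + φ (u τ) * u' τ) s t := by
  have hpq := Real.HolderConjugate.conjExponent hp
  have hpow : ACOn (fun τ => |u' τ| ^ p) (fun τ => p.conjExponent * u' τ * v' τ) s t := by
    simpa only [abs_PhiP_rpow hpq, PhiP_PhiP hpq] using hv.comp hst
      (hasDerivAt_abs_rpow_PhiP hpq.symm.lt) ((continuous_PhiP hpq.symm.lt).const_mul _)
  have hpot := hu.comp hst (fun y => (hφ.integral_hasStrictDerivAt 0 y).hasDerivAt) hφ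
  refine (((ha.mul hst hpow).const_mul hst (1 - 1 / p)).add hst hpot).congr_deriv hst ?_
  filter_upwards [hw.ae_eq_deriv (ha.mul hst hv)] with τ hwτ
  have hconj : (1 - 1 / p) * p.conjExponent = 1 := by
    rw [one_div, hpq.one_sub_inv, inv_mul_cancel₀ hpq.symm.ne_zero]
  rw [hwτ]
  linear_combination a τ * u' τ * v' τ * hconj - a' τ * PhiP_mul_self hp (u' τ)

lemma ACOn.continuousOn_of_PhiP {s t : ℝ} (hp : 1 < p)
    (hv : ACOn (fun τ => PhiP p (u' τ)) v' s t) : ContinuousOn u' (Icc s t) := by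
  have hpq := Real.HolderConjugate.conjExponent hp
  simpa only [Function.comp_def, PhiP_PhiP hpq] using
    (continuous_PhiP hpq.symm.lt).comp_continuousOn hv.continuousOn

lemma energy_deriv_le {τ : ℝ} (hp : 1 < p)
    (hgrowth : h τ (u τ) (u' τ) * u' τ ≤
      θ * q τ * |u τ| ^ l * |u' τ| ^ (p - l) + (1 - θ) * dA n p a a' τ * |u' τ| ^ p)
    (hODE : w' τ + (n - 1) * (a τ / τ) * PhiP p (u' τ) - h τ (u τ) (u' τ) + φ (u τ) = 0) :
    w' τ * u' τ - 1 / p * a' τ * |u' τ| ^ p + φ (u τ) * u' τ ≤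
      θ * (q τ * |u τ| ^ l * |u' τ| ^ (p - l) - dA n p a a' τ * |u' τ| ^ p) := by
  calc w' τ * u' τ - 1 / p * a' τ * |u' τ| ^ p + φ (u τ) * u' τ
      = h τ (u τ) (u' τ) * u' τ - dA n p a a' τ * |u' τ| ^ p := by
        rw [dA]
        linear_combination u' τ * hODE - (n - 1) * (a τ / τ) * PhiP_mul_self hp (u' τ)
    _ ≤ θ * (q τ * |u τ| ^ l * |u' τ| ^ (p - l) - dA n p a a' τ * |u' τ| ^ p) := by linarith

theorem energy_le_energy_zero (hp : 1 < p) (hl0 : 0 < l) (hlp : l < p) (hr : 0 ≤ r) (hθ : 0 ≤ θ)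
    (hφ : Continuous φ) (ha : ACOn a a' 0 r) (hq : AEMeasurable q (volume.restrict (Ioc 0 r)))
    (hq0 : ∀ᵐ τ ∂volume.restrict (Ioc 0 r), 0 ≤ q τ)
    (hd0 : ∀ᵐ τ ∂volume.restrict (Ioc 0 r), 0 < dA n p a a' τ)
    (hd : IntegrableOn (dA n p a a') (Ioc 0 r))
    (hgrowth : ∀ᵐ τ ∂volume.restrict (Ioc 0 r), h τ (u τ) (u' τ) * u' τ ≤
      θ * q τ * |u τ| ^ l * |u' τ| ^ (p - l) + (1 - θ) * dA n p a a' τ * |u' τ| ^ p)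
    (hK : BDK p l q (dA n p a a') 0 (Ioc 0 r) ≤ 1)
    (hu : ACOn u u' 0 r) (hv : ACOn (fun τ => PhiP p (u' τ)) v' 0 r)
    (hw : ACOn (fun τ => a τ * PhiP p (u' τ)) w' 0 r) (hu0 : u 0 = 0)
    (hODE : ∀ᵐ τ ∂volume.restrict (Ioc 0 r),
      w' τ + (n - 1) * (a τ / τ) * PhiP p (u' τ) - h τ (u τ) (u' τ) + φ (u τ) = 0) :
    energy p φ a u u' r ≤ energy p φ a u u' 0 := by
  set d := dA n p a a'
  have hE := ACOn.energy hp hr hφ ha hu hv hw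
  have hM : IntegrableOn (fun τ => d τ * |u' τ| ^ p) (Ioc 0 r) :=
    (((integrableOn_Icc_iff_integrableOn_Ioc (by simp)).2 hd).mul_continuousOn
      ((hv.continuousOn_of_PhiP hp).abs.rpow_const fun _ _ => .inr (by linarith))
      isCompact_Icc).mono_set Ioc_subset_Icc_self
  have hM0 : 0 ≤ ∫ τ in Ioc 0 r, d τ * |u' τ| ^ p := by
    refine integral_nonneg_of_ae ?_
    filter_upwards [hd0] with τ hτ
    exact mul_nonneg hτ.le (by positivity)
  obtain ⟨hB, hBK⟩ := integral_mul_rpow_le_BDK_mul hp hl0 hlp hr hq hd.aemeasurable hq0 hd0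
    (ne_top_of_le_ne_top ENNReal.one_ne_top hK) hu hu0 hM
  have hBM : ∫ τ in Ioc 0 r, q τ * |u τ| ^ l * |u' τ| ^ (p - l) ≤
      ∫ τ in Ioc 0 r, d τ * |u' τ| ^ p :=
    hBK.trans (mul_le_of_le_one_left hM0 (ENNReal.toReal_le_of_le_ofReal zero_le_one (by simpa)))
  rw [← sub_nonpos, ← hE.integral_eq_sub hr]
  calc ∫ τ in Ioc 0 r, (w' τ * u' τ - 1 / p * a' τ * |u' τ| ^ p + φ (u τ) * u' τ)
      ≤ ∫ τ in Ioc 0 r, θ * (q τ * |u τ| ^ l * |u' τ| ^ (p - l) - d τ * |u' τ| ^ p) :=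
        integral_mono_ae hE.integrableOn ((hB.sub hM).const_mul θ)
          (by filter_upwards [hgrowth, hODE] with τ hgτ hτ using energy_deriv_le hp hgτ hτ)
    _ = θ * ((∫ τ in Ioc 0 r, q τ * |u τ| ^ l * |u' τ| ^ (p - l)) -
          ∫ τ in Ioc 0 r, d τ * |u' τ| ^ p) := by
        rw [integral_const_mul, integral_sub hB hM]
    _ ≤ 0 := mul_nonpos_of_nonneg_of_nonpos hθ (sub_nonpos.2 hBM)

end Energy

theorem apriori_bound_divergent_general
    (p l n : ℝ) (R : ℝ≥0∞) (hp : 1 < p) (hl0 : 0 < l) (hlp : l < p)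
    (φ : ℝ → ℝ) (hφcont : Continuous φ)
    (a a' : ℝ → ℝ)
    (haAC : ∀ r : ℝ, 0 < r → ENNReal.ofReal r < R → ACOn a a' 0 r)
    (q : ℝ → ℝ) (hqmeas : AEMeasurable q (volume.restrict {τ : ℝ | 0 < τ ∧ ENNReal.ofReal τ < R}))
    (hapos : ∀ᵐ τ ∂(volume.restrict {τ : ℝ | 0 < τ ∧ ENNReal.ofReal τ < R}), 0 < a τ)
    (hvpos : ∀ᵐ τ ∂(volume.restrict {τ : ℝ | 0 < τ ∧ ENNReal.ofReal τ < R}), 0 < dA n p a a' τ)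
    (hvint : ∀ r : ℝ, 0 < r → ENNReal.ofReal r < R → IntegrableOn (dA n p a a') (Ioc 0 r))
    (h : ℝ → ℝ → ℝ → ℝ) (θ : ℝ) (hθ : 0 ≤ θ)
    (hq0 : ∀ᵐ τ ∂(volume.restrict {τ : ℝ | 0 < τ ∧ ENNReal.ofReal τ < R}), 0 ≤ q τ)
    (hgrowth : ∀ᵐ τ ∂(volume.restrict {τ : ℝ | 0 < τ ∧ ENNReal.ofReal τ < R}),
      ∀ lam₀ lam₁ : ℝ, h τ lam₀ lam₁ * lam₁ ≤
        θ * q τ * |lam₀| ^ l * |lam₁| ^ (p - l) + (1 - θ) * dA n p a a' τ * |lam₁| ^ p)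
    (hK : BDK p l q (dA n p a a') 0 {τ : ℝ | 0 < τ ∧ ENNReal.ofReal τ < R} ≤ 1)
    (u u' v' w' : ℝ → ℝ)
    (huAC : ∀ r : ℝ, 0 < r → ENNReal.ofReal r < R → ACOn u u' 0 r)
    (hvAC : ∀ r : ℝ, 0 < r → ENNReal.ofReal r < R → ACOn (fun τ => PhiP p (u' τ)) v' 0 r)
    (hwAC : ∀ r : ℝ, 0 < r → ENNReal.ofReal r < R →
      ACOn (fun τ => a τ * PhiP p (u' τ)) w' 0 r)
    (hu0 : u 0 = 0)
    (hODE : ∀ᵐ τ ∂(volume.restrict {τ : ℝ | 0 < τ ∧ ENNReal.ofReal τ < R}),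
      w' τ + (n - 1) * (a τ / τ) * PhiP p (u' τ) - h τ (u τ) (u' τ) + φ (u τ) = 0) :
    ∀ r : ℝ, 0 < r → ENNReal.ofReal r < R →
      (∫ σ in (0 : ℝ)..u r, φ σ) ≤ (1 - 1 / p) * a 0 * |u' 0| ^ p := by
  intro r hr hrR
  have hsub : Ioc 0 r ⊆ {τ : ℝ | 0 < τ ∧ ENNReal.ofReal τ < R} := fun τ hτ =>
    ⟨hτ.1, (ENNReal.ofReal_le_ofReal hτ.2).trans_lt hrR⟩
  have hgrowth_u : ∀ᵐ τ ∂volume.restrict (Ioc 0 r), h τ (u τ) (u' τ) * u' τ ≤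
      θ * q τ * |u τ| ^ l * |u' τ| ^ (p - l) + (1 - θ) * dA n p a a' τ * |u' τ| ^ p :=
    (ae_restrict_of_ae_restrict_of_subset hsub hgrowth).mono fun τ hτ => hτ (u τ) (u' τ)
  have henergy := energy_le_energy_zero hp hl0 hlp hr.le hθ hφcont (haAC r hr hrR)
    (hqmeas.mono_set hsub) (ae_restrict_of_ae_restrict_of_subset hsub hq0)
    (ae_restrict_of_ae_restrict_of_subset hsub hvpos) (hvint r hr hrR) hgrowth_u
    ((BDK_mono_set hl0.le hlp.le hsub).trans hK) (huAC r hr hrR) (hvAC r hr hrR) (hwAC r hr hrR)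
    hu0 (ae_restrict_of_ae_restrict_of_subset hsub hODE)
  have ha0 : ∀ᵐ τ ∂volume.restrict (Icc 0 r), 0 ≤ a τ := by
    rw [← restrict_Ioc_eq_restrict_Icc]
    exact (ae_restrict_of_ae_restrict_of_subset hsub hapos).mono fun τ => le_of_lt
  have har : 0 ≤ a r := nonneg_of_ae_nonneg_of_continuousOn hr (haAC r hr hrR).continuousOn ha0 r
    (right_mem_Icc.2 hr.le)
  have hkinetic : 0 ≤ (1 - 1 / p) * (a r * |u' r| ^ p) :=
    mul_nonneg (sub_nonneg.2 ((div_le_one (by linarith)).2 hp.le)) (by positivity)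
  simp only [energy, hu0, intervalIntegral.integral_same, add_zero] at henergy
  linarith

/-- **A priori bound (divergent form)**, Theorem 2 i) of the paper. -/
theorem apriori_bound_divergent
    (p l n : ℝ) (R : ℝ≥0∞)
    (hp : 1 < p) (hl0 : 0 < l) (hlp : l < p) (hn : 1 ≤ n) (hR : 0 < R)
    (φ : ℝ → ℝ) (hφcont : Continuous φ) (hφodd : ∀ t : ℝ, φ (-t) = -φ t)
    (hφsign : ∀ᵐ τ ∂(volume : Measure ℝ), 0 < τ * φ τ)
    (a a' : ℝ → ℝ)
    (haAC : ∀ r : ℝ, 0 < r → ENNReal.ofReal r < R → ACOn a a' 0 r)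
    (q : ℝ → ℝ) (hqmeas : Measurable q)
    (hapos : ∀ᵐ τ ∂(volume.restrict {τ : ℝ | 0 < τ ∧ ENNReal.ofReal τ < R}), 0 < a τ)
    (hvpos : ∀ᵐ τ ∂(volume.restrict {τ : ℝ | 0 < τ ∧ ENNReal.ofReal τ < R}), 0 < dA n p a a' τ)
    (hvint : ∀ r : ℝ, 0 < r → ENNReal.ofReal r < R →
      IntegrableOn (dA n p a a') (Set.Ioc 0 r) ∧
        IntegrableOn (fun τ => dA n p a a' τ ^ (-(1 / (p - 1)))) (Set.Ioc 0 r))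
    (hqint : ∀ r : ℝ, 0 < r → ENNReal.ofReal r < R → IntegrableOn q (Set.Ioc 0 r))
    (h : ℝ → ℝ → ℝ → ℝ)
    (hhmeas : ∀ lam₀ lam₁ : ℝ, Measurable fun τ => h τ lam₀ lam₁)
    (hhcont : ∀ τ : ℝ, Continuous fun z : ℝ × ℝ => h τ z.1 z.2)
    (θ : ℝ) (hθ0 : 0 < θ) (hθ1 : θ ≤ 1)
    (hq0 : ∀ᵐ τ ∂(volume.restrict {τ : ℝ | 0 < τ ∧ ENNReal.ofReal τ < R}), 0 ≤ q τ)
    (hgrowth : ∀ᵐ τ ∂(volume.restrict {τ : ℝ | 0 < τ ∧ ENNReal.ofReal τ < R}),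
      ∀ lam₀ lam₁ : ℝ, h τ lam₀ lam₁ * lam₁ ≤
        θ * q τ * |lam₀| ^ l * |lam₁| ^ (p - l) + (1 - θ) * dA n p a a' τ * |lam₁| ^ p)
    (hK : BDK p l q (dA n p a a') 0 {τ : ℝ | 0 < τ ∧ ENNReal.ofReal τ < R} ≤ 1)
    (u u' v' w' : ℝ → ℝ)
    (huAC : ∀ r : ℝ, 0 < r → ENNReal.ofReal r < R → ACOn u u' 0 r)
    (hvAC : ∀ r : ℝ, 0 < r → ENNReal.ofReal r < R →
      ACOn (fun τ => PhiP p (u' τ)) v' 0 r)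
    (hwAC : ∀ r : ℝ, 0 < r → ENNReal.ofReal r < R →
      ACOn (fun τ => a τ * PhiP p (u' τ)) w' 0 r)
    (hu0 : u 0 = 0)
    (hODE : ∀ᵐ τ ∂(volume.restrict {τ : ℝ | 0 < τ ∧ ENNReal.ofReal τ < R}),
      w' τ + (n - 1) * (a τ / τ) * PhiP p (u' τ)
        - h τ (u τ) (u' τ) + φ (u τ) = 0) :
    ∀ r : ℝ, 0 < r → ENNReal.ofReal r < R →
      (∫ σ in (0:ℝ)..(|u r|), φ σ) ≤ (1 - 1 / p) * a 0 * |u' 0| ^ p := by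
  intro r hr hrR
  rw [integral_abs_of_odd hφodd]
  exact apriori_bound_divergent_general p l n R hp hl0 hlp φ hφcont a a' haAC q hqmeas.aemeasurable
    hapos hvpos (fun r hr hrR => (hvint r hr hrR).1) h θ hθ0.le hq0 hgrowth hK u u' v' w' huAC hvAC
    hwAC hu0 hODE r hr hrR
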